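/- arXiv:1604.07014 — 8 statements merged into one kernel-verified Lean document; each statement's English description precedes it below -/
import Mathlib

section
/- Let ε > 0, L > 0, and define E[θ] = ∫_0^L ( θ'(R)²/2 + ε·cos(2θ(R)) ) dR on continuously differentiable functions θ : [0,L] → ℝ. Then the constant function θ ≡ 0 (the straight equilibrium) is not a local minimum of E: for every δ > 0 there exists a continuously differentiable φ : [0,L] → ℝ with sup_{R ∈ [0,L]} (|φ(R)| + |φ'(R)|) < δ and E[φ] < E[0]. -/
/-- The non-dimensional ladder energy with `Û₀ = 0`:
`E[θ] = ∫_0^L (θ'(R)²/2 + ε·cos(2θ(R))) dR`. -/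
noncomputable def ladderEnergy (ε L : ℝ) (θ : ℝ → ℝ) : ℝ :=
  ∫ R in (0 : ℝ)..L, (deriv θ R ^ 2 / 2 + ε * Real.cos (2 * θ R))

/-- The straight equilibrium `θ ≡ 0` is not a local minimum of the ladder energy. -/
theorem stmt_5 (ε L : ℝ) (hε : 0 < ε) (hL : 0 < L) :
    ∀ δ > 0, ∃ φ : ℝ → ℝ, ContDiff ℝ 1 φ ∧
      (∀ R ∈ Set.Icc 0 L, |φ R| + |deriv φ R| < δ) ∧
      ladderEnergy ε L φ < ladderEnergy ε L (fun _ => (0 : ℝ)) := by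
  intro δ hδ
  have hc : 0 < min (δ / 2) 1 := lt_min (by linarith) one_pos
  refine ⟨fun _ => min (δ / 2) 1, contDiff_const, ?_, ?_⟩
  · intro R _
    have h1 := min_le_left (δ / 2) 1
    simp only [deriv_const, abs_zero, abs_of_pos hc]
    linarith
  · have h2 := min_le_right (δ / 2) 1
    have hcos : Real.cos (2 * min (δ / 2) 1) < Real.cos 0 :=
      Real.cos_lt_cos_of_nonneg_of_le_pi le_rfl (by linarith [Real.pi_gt_three]) (by linarith)
    have h3 := mul_lt_mul_of_pos_left hcos (mul_pos hL hε)
    rw [Real.cos_zero] at h3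
    simp only [ladderEnergy, deriv_const, intervalIntegral.integral_const, smul_eq_mul,
      mul_zero, Real.cos_zero]
    nlinarith
end

section
/- Let ε > 0 and for θ₀ ∈ (0, π/2) define L_p(θ₀) = ∫_{−θ₀}^{θ₀} dθ / √( 2ε·(cos(2θ) − cos(2θ₀)) ). Then L_p(θ₀) tends to +∞ as θ₀ → (π/2)⁻. -/
open Filter

/-- The length `L_p(θ₀)` of the ladder admitting a single-perversion equilibrium
of amplitude `θ₀`. -/
noncomputable def Lp (ε θ₀ : ℝ) : ℝ :=
  ∫ θ in (-θ₀)..θ₀, 1 / Real.sqrt (2 * ε * (Real.cos (2 * θ) - Real.cos (2 * θ₀)))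

lemma aux_int (ε : ℝ) (hε : 0 < ε) (a : ℝ) (ha : 0 < a) (ha2 : a < Real.pi / 2) :
    IntervalIntegrable (fun θ => 1 / Real.sqrt (2 * ε * (Real.cos (2 * θ) - Real.cos (2 * a))))
      MeasureTheory.volume (-a) a := by
  have hs : 0 < Real.sin (2 * a) := Real.sin_pos_of_pos_of_lt_pi (by linarith) (by linarith)
  obtain ⟨c, hc⟩ : ∃ c, c = Real.sin (2 * a) / (2 * a) := ⟨_, rfl⟩
  have hc0 : 0 < c := by rw [hc]; positivity
  have hlin : ∀ u, 0 ≤ u → u ≤ 2 * a → c * u ≤ Real.sin u := by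
    intro u h0 h1
    have hcv := (strictConcaveOn_sin_Icc.concaveOn).2 (show (0:ℝ) ∈ _ from
      ⟨le_rfl, Real.pi_pos.le⟩) (show 2 * a ∈ _ from ⟨by linarith, by linarith⟩)
      (show 0 ≤ 1 - u / (2 * a) by rw [sub_nonneg, div_le_one (by linarith)]; exact h1)
      (show 0 ≤ u / (2 * a) by positivity) (by ring)
    simp only [smul_eq_mul, Real.sin_zero, mul_zero, zero_add] at hcv
    have e : u / (2 * a) * (2 * a) = u := by field_simp
    rw [e] at hcv
    rw [hc]
    calc _ = u / (2 * a) * Real.sin (2 * a) := by ring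
      _ ≤ _ := hcv
  obtain ⟨M, hM⟩ : ∃ M, M = 4 * ε * c ^ 2 * a := ⟨_, rfl⟩
  have hM0 : 0 < M := by rw [hM]; positivity
  have hr : ∀ u, 0 < u → 1 / Real.sqrt (M * u) = 1 / Real.sqrt M * u ^ (-(1 / 2) : ℝ) := by
    intro u hu
    rw [Real.sqrt_mul hM0.le, Real.rpow_neg hu.le, ← Real.sqrt_eq_rpow]
    field_simp
  have h0 : IntervalIntegrable (fun x : ℝ => x ^ (-(1 / 2) : ℝ)) MeasureTheory.volume 0 (2 * a) :=
    intervalIntegral.intervalIntegrable_rpow' (by norm_num)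
  have h1 : IntervalIntegrable (fun x : ℝ => (a - x) ^ (-(1 / 2) : ℝ))
      MeasureTheory.volume (-a) a := by
    have := (h0.comp_sub_left a).symm
    convert this using 1 <;> ring
  have h2 : IntervalIntegrable (fun x : ℝ => (x + a) ^ (-(1 / 2) : ℝ))
      MeasureTheory.volume (-a) a := by
    have := (h0.comp_add_right a)
    convert this using 1 <;> ring
  have hg := (h1.add h2).const_mul (1 / Real.sqrt M)
  refine hg.mono_fun ?_ ?_
  · apply Measurable.aestronglyMeasurable
    fun_prop
  · rw [Set.uIoc_of_le (by linarith)]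
    refine (MeasureTheory.ae_restrict_iff' measurableSet_Ioc).2 (Eventually.of_forall ?_)
    rintro x ⟨hx1, hx2⟩
    rcases hx2.eq_or_lt with rfl | hx2
    · simp
      positivity
    have hu : 0 < a - x := by linarith
    have hv : 0 < x + a := by linarith
    have p1 := Real.rpow_pos_of_pos hu (-(1 / 2))
    have p2 := Real.rpow_pos_of_pos hv (-(1 / 2))
    have hK : 0 < 1 / Real.sqrt M := by positivity
    have hL : 0 ≤ 1 / Real.sqrt (2 * ε * (Real.cos (2 * x) - Real.cos (2 * a))) := by positivity
    have hR : 0 ≤ 1 / Real.sqrt M * ((a - x) ^ (-(1 / 2) : ℝ) + (x + a) ^ (-(1 / 2) : ℝ)) := by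
      positivity
    simp only [Real.norm_eq_abs]
    rw [abs_of_nonneg hL, abs_of_nonneg hR]
    have hcos : Real.cos (2 * x) - Real.cos (2 * a) = 2 * (Real.sin (a - x) * Real.sin (x + a)) := by
      rw [Real.cos_sub_cos, show (2 * x + 2 * a) / 2 = x + a by ring,
        show (2 * x - 2 * a) / 2 = -(a - x) by ring, Real.sin_neg]
      ring
    have hprod : (c * (a - x)) * (c * (x + a)) ≤ Real.sin (a - x) * Real.sin (x + a) := by
      have q1 := hlin (a - x) hu.le (by linarith)
      have q2 := hlin (x + a) hv.le (by linarith)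
      have : 0 < c * (a - x) := by positivity
      exact mul_le_mul q1 q2 (by positivity) (by linarith)
    have hfin : 4 * ε * c ^ 2 * ((a - x) * (x + a)) ≤
        2 * ε * (Real.cos (2 * x) - Real.cos (2 * a)) := by
      rw [hcos]
      have := mul_le_mul_of_nonneg_left hprod (by positivity : 0 ≤ 4 * ε)
      linarith
    have hq : 0 < 4 * ε * c ^ 2 := by positivity
    rcases le_total 0 x with h | h
    · have : M * (a - x) ≤ 2 * ε * (Real.cos (2 * x) - Real.cos (2 * a)) := by
        refine le_trans ?_ hfin
        rw [hM, mul_assoc]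
        refine mul_le_mul_of_nonneg_left ?_ hq.le
        nlinarith
      calc _ ≤ 1 / Real.sqrt (M * (a - x)) :=
            one_div_le_one_div_of_le (by positivity) (Real.sqrt_le_sqrt this)
        _ = _ := hr _ hu
        _ ≤ _ := mul_le_mul_of_nonneg_left (by linarith) hK.le
    · have : M * (x + a) ≤ 2 * ε * (Real.cos (2 * x) - Real.cos (2 * a)) := by
        refine le_trans ?_ hfin
        rw [hM, mul_assoc]
        refine mul_le_mul_of_nonneg_left ?_ hq.le
        nlinarith
      calc _ ≤ 1 / Real.sqrt (M * (x + a)) :=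
            one_div_le_one_div_of_le (by positivity) (Real.sqrt_le_sqrt this)
        _ = _ := hr _ hv
        _ ≤ _ := mul_le_mul_of_nonneg_left (by linarith) hK.le

lemma aux_lower (ε : ℝ) (hε : 0 < ε) (a : ℝ) (ha : 0 < a) (ha2 : a < Real.pi / 2) :
    1 / (2 * Real.sqrt ε) * (Real.log (Real.pi / 2) + - Real.log (Real.pi / 2 - a)) ≤ Lp ε a := by
  have hI := aux_int ε hε a ha ha2
  have hse : 0 < Real.sqrt ε := Real.sqrt_pos.2 hε
  have hI0 : IntervalIntegrable
      (fun θ => 1 / Real.sqrt (2 * ε * (Real.cos (2 * θ) - Real.cos (2 * a))))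
      MeasureTheory.volume 0 a := by
    apply hI.mono_set
    rw [Set.uIcc_of_le ha.le, Set.uIcc_of_le (by linarith)]
    exact Set.Icc_subset_Icc_left (by linarith)
  have hG : IntervalIntegrable (fun θ => 1 / (2 * Real.sqrt ε) * (1 / (Real.pi / 2 - θ)))
      MeasureTheory.volume 0 a := by
    apply ContinuousOn.intervalIntegrable
    rw [Set.uIcc_of_le ha.le]
    refine ContinuousOn.mul continuousOn_const (ContinuousOn.div continuousOn_const (by fun_prop) ?_)
    rintro x ⟨_, hx⟩
    linarith
  have step1 : ∫ θ in (0:ℝ)..a, 1 / Real.sqrt (2 * ε * (Real.cos (2 * θ) - Real.cos (2 * a)))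
      ≤ Lp ε a := by
    unfold Lp
    apply intervalIntegral.integral_mono_interval (by linarith) ha.le le_rfl _ hI
    exact Eventually.of_forall fun x => by simp only [Pi.zero_apply]; positivity
  have step2 : ∫ θ in (0:ℝ)..a, 1 / (2 * Real.sqrt ε) * (1 / (Real.pi / 2 - θ)) ≤
      ∫ θ in (0:ℝ)..a, 1 / Real.sqrt (2 * ε * (Real.cos (2 * θ) - Real.cos (2 * a))) := by
    apply intervalIntegral.integral_mono_on_of_le_Ioo ha.le hG hI0
    rintro x ⟨hx0, hxa⟩
    have hd : 0 < Real.pi / 2 - x := by linarith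
    have hlt : Real.cos (2 * a) < Real.cos (2 * x) :=
      Real.cos_lt_cos_of_nonneg_of_le_pi (by linarith) (by linarith) (by linarith)
    have hc : Real.cos x ≤ Real.pi / 2 - x := by
      rw [← Real.sin_pi_div_two_sub]; exact Real.sin_le hd.le
    have hc0 : 0 < Real.cos x := Real.cos_pos_of_mem_Ioo ⟨by linarith, by linarith⟩
    rw [one_div_mul_one_div]
    apply one_div_le_one_div_of_le
    · apply Real.sqrt_pos.2
      have : 0 < Real.cos (2 * x) - Real.cos (2 * a) := by linarith
      positivity
    · apply Real.sqrt_le_iff.2 ⟨by positivity, ?_⟩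
      have e : (2 * Real.sqrt ε * (Real.pi / 2 - x)) ^ 2 = ε * (4 * (Real.pi / 2 - x) ^ 2) := by
        rw [mul_pow, mul_pow, Real.sq_sqrt hε.le]; ring
      rw [e, mul_comm 2 ε, mul_assoc]
      apply mul_le_mul_of_nonneg_left _ hε.le
      have := Real.neg_one_le_cos (2 * a)
      have := Real.cos_two_mul x
      nlinarith
  have step3 : ∫ θ in (0:ℝ)..a, 1 / (2 * Real.sqrt ε) * (1 / (Real.pi / 2 - θ)) =
      1 / (2 * Real.sqrt ε) * (Real.log (Real.pi / 2) + - Real.log (Real.pi / 2 - a)) := by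
    rw [intervalIntegral.integral_eq_sub_of_hasDerivAt
      (f := fun θ => 1 / (2 * Real.sqrt ε) * (- Real.log (Real.pi / 2 - θ))) _ hG]
    · rw [sub_zero]; ring
    · intro x hx
      rw [Set.uIcc_of_le ha.le] at hx
      have hd : Real.pi / 2 - x ≠ 0 := by have := hx.2; linarith
      have := (((hasDerivAt_id x).const_sub (Real.pi / 2)).log hd).neg.const_mul
        (1 / (2 * Real.sqrt ε))
      refine HasDerivAt.congr_deriv this ?_
      simp [neg_div]
  linarith

/-- `L_p(θ₀) → +∞` as `θ₀ → (π/2)⁻`. -/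
theorem stmt_6 (ε : ℝ) (hε : 0 < ε) :
    Tendsto (fun θ₀ => Lp ε θ₀)
      (nhdsWithin (Real.pi / 2) (Set.Ioo 0 (Real.pi / 2))) atTop := by
  have hse : 0 < Real.sqrt ε := Real.sqrt_pos.2 hε
  refine tendsto_atTop_mono' _
    (f₁ := fun a => 1 / (2 * Real.sqrt ε) *
      (Real.log (Real.pi / 2) + - Real.log (Real.pi / 2 - a))) ?_ ?_
  · filter_upwards [self_mem_nhdsWithin] with a ha
    exact aux_lower ε hε a ha.1 ha.2
  · apply Tendsto.const_mul_atTop (by positivity)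
    apply tendsto_atTop_add_const_left
    apply tendsto_neg_atBot_atTop.comp
    apply Real.tendsto_log_nhdsGT_zero.comp
    apply tendsto_nhdsWithin_iff.2 ⟨?_, ?_⟩
    · have : Continuous fun a : ℝ => Real.pi / 2 - a := by fun_prop
      have := (this.tendsto (Real.pi / 2)).mono_left
        (nhdsWithin_le_nhds (s := Set.Ioo 0 (Real.pi / 2)))
      simpa using this
    · filter_upwards [self_mem_nhdsWithin] with a ha
      exact sub_pos.2 ha.2
end

section
/- Let ε > 0 and for θ₀ ∈ (0, π/2) define L_p(θ₀) = ∫_{−θ₀}^{θ₀} dθ / √( 2ε·(cos(2θ) − cos(2θ₀)) ). Then L_p(θ₀) tends to π/(2√ε) as θ₀ → 0⁺. -/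
open Filter

lemma sin_lower {t x : ℝ} (ht : t < Real.pi / 2) (hx : 0 ≤ x) (hxt : x ≤ t) :
    x * Real.cos t ≤ Real.sin x := by
  have h1 : Real.cos t ≤ Real.cos x :=
    Real.cos_le_cos_of_nonneg_of_le_pi hx (by linarith [Real.pi_pos]) hxt
  have hc : 0 < Real.cos x := Real.cos_pos_of_mem_Ioo ⟨by linarith [Real.pi_pos], by linarith⟩
  have h2 : x ≤ Real.tan x := Real.le_tan hx (by linarith)
  rw [Real.tan_eq_sin_div_cos, le_div_iff₀ hc] at h2
  nlinarith

lemma D_bounds {a θ : ℝ} (ha : 0 < a) (ha' : a < Real.pi / 4) (h1 : -a ≤ θ) (h2 : θ ≤ a) :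
    2 * (Real.cos (2 * a)) ^ 2 * (a ^ 2 - θ ^ 2) ≤ Real.cos (2 * θ) - Real.cos (2 * a) ∧
    Real.cos (2 * θ) - Real.cos (2 * a) ≤ 2 * (a ^ 2 - θ ^ 2) := by
  have e : Real.cos (2 * θ) - Real.cos (2 * a) = 2 * (Real.sin (a + θ) * Real.sin (a - θ)) := by
    rw [Real.cos_sub_cos, show (2 * θ + 2 * a) / 2 = a + θ by ring,
      show (2 * θ - 2 * a) / 2 = -(a - θ) by ring, Real.sin_neg]
    ring
  have hc : 0 < Real.cos (2 * a) := Real.cos_pos_of_mem_Ioo ⟨by linarith, by linarith⟩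
  have p1 := sin_lower (t := 2 * a) (x := a + θ) (by linarith) (by linarith) (by linarith)
  have p2 := sin_lower (t := 2 * a) (x := a - θ) (by linarith) (by linarith) (by linarith)
  have q1 := Real.sin_le (x := a + θ) (by linarith)
  have q2 := Real.sin_le (x := a - θ) (by linarith)
  have z1 : 0 ≤ (a + θ) * Real.cos (2 * a) := mul_nonneg (by linarith) hc.le
  have z2 : 0 ≤ (a - θ) * Real.cos (2 * a) := mul_nonneg (by linarith) hc.le
  have m1 := mul_le_mul p1 p2 z2 (z1.trans p1)
  have m2 := mul_le_mul q1 q2 (z2.trans p2) (by linarith)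
  rw [e]
  constructor <;> nlinarith

lemma G_int {a : ℝ} (ha : 0 < a) :
    IntervalIntegrable (fun θ : ℝ => 1 / Real.sqrt (a ^ 2 - θ ^ 2)) MeasureTheory.volume (-a) a ∧
    ∫ θ in (-a)..a, 1 / Real.sqrt (a ^ 2 - θ ^ 2) = Real.pi := by
  have hd : ∀ x ∈ Set.Ioo (-a) a, HasDerivAt (fun θ => Real.arcsin (θ / a))
      (1 / Real.sqrt (a ^ 2 - x ^ 2)) x := by
    intro x hx
    have l1 : x / a ≠ -1 := by
      intro h; rw [div_eq_iff ha.ne'] at h; linarith [hx.1]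
    have l2 : x / a ≠ 1 := by
      intro h; rw [div_eq_iff ha.ne'] at h; linarith [hx.2]
    have key := (Real.hasDerivAt_arcsin l1 l2).comp x ((hasDerivAt_id x).div_const a)
    have e1 : a ^ 2 - x ^ 2 = a ^ 2 * (1 - (x / a) ^ 2) := by field_simp
    have e2 : 1 / Real.sqrt (a ^ 2 - x ^ 2) = 1 / Real.sqrt (1 - (x / a) ^ 2) * (1 / a) := by
      rw [e1, Real.sqrt_mul (by positivity), Real.sqrt_sq ha.le]
      rw [div_mul_div_comm, mul_comm a, one_mul]
    rw [e2]
    exact key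
  have hcont : Continuous (fun θ => Real.arcsin (θ / a)) :=
    Real.continuous_arcsin.comp (continuous_id.div_const a)
  have hi : IntervalIntegrable (fun θ : ℝ => 1 / Real.sqrt (a ^ 2 - θ ^ 2))
      MeasureTheory.volume (-a) a := by
    apply intervalIntegral.intervalIntegrable_deriv_of_nonneg hcont.continuousOn
    · rw [min_eq_left (by linarith), max_eq_right (by linarith)]; exact hd
    · intro x _; positivity
  refine ⟨hi, ?_⟩
  rw [intervalIntegral.integral_eq_sub_of_hasDerivAt_of_le (by linarith) hcont.continuousOn hd hi]
  rw [neg_div, div_self ha.ne', Real.arcsin_neg, Real.arcsin_one]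
  ring

lemma f_bounds {ε a θ : ℝ} (hε : 0 < ε) (ha : 0 < a) (ha' : a < Real.pi / 4)
    (h1 : -a ≤ θ) (h2 : θ ≤ a) :
    1 / (2 * Real.sqrt ε) * (1 / Real.sqrt (a ^ 2 - θ ^ 2)) ≤
      1 / Real.sqrt (2 * ε * (Real.cos (2 * θ) - Real.cos (2 * a))) ∧
    1 / Real.sqrt (2 * ε * (Real.cos (2 * θ) - Real.cos (2 * a))) ≤
      1 / (2 * Real.sqrt ε * Real.cos (2 * a)) * (1 / Real.sqrt (a ^ 2 - θ ^ 2)) := by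
  obtain ⟨b1, b2⟩ := D_bounds ha ha' h1 h2
  have hc : 0 < Real.cos (2 * a) := Real.cos_pos_of_mem_Ioo ⟨by linarith, by linarith⟩
  have hs : 0 < Real.sqrt ε := Real.sqrt_pos.2 hε
  have hss := Real.sq_sqrt hε.le
  have hq : 0 ≤ a ^ 2 - θ ^ 2 := by nlinarith
  rcases hq.eq_or_lt with h0 | hq
  · rw [← h0] at b1 b2 ⊢
    have : Real.cos (2 * θ) - Real.cos (2 * a) = 0 := by linarith
    simp [this]
  have hr : 0 < Real.sqrt (a ^ 2 - θ ^ 2) := Real.sqrt_pos.2 hq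
  have hrr := Real.sq_sqrt hq.le
  have hD : 0 < Real.cos (2 * θ) - Real.cos (2 * a) := lt_of_lt_of_le (by positivity) b1
  rw [div_mul_div_comm, div_mul_div_comm, one_mul]
  constructor
  · apply one_div_le_one_div_of_le (by positivity)
    apply Real.sqrt_le_iff.2 ⟨by positivity, ?_⟩
    rw [mul_pow, mul_pow, hss, hrr]
    nlinarith
  · apply one_div_le_one_div_of_le (by positivity)
    apply Real.le_sqrt_of_sq_le
    rw [mul_pow, mul_pow, mul_pow, hss, hrr]
    nlinarith

lemma Lp_bounds {ε a : ℝ} (hε : 0 < ε) (ha : 0 < a) (ha' : a < Real.pi / 4) :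
    1 / (2 * Real.sqrt ε) * Real.pi ≤ Lp ε a ∧
    Lp ε a ≤ 1 / (2 * Real.sqrt ε * Real.cos (2 * a)) * Real.pi := by
  obtain ⟨hi, he⟩ := G_int ha
  have hle : -a ≤ a := by linarith
  have hf : IntervalIntegrable
      (fun θ => 1 / Real.sqrt (2 * ε * (Real.cos (2 * θ) - Real.cos (2 * a))))
      MeasureTheory.volume (-a) a := by
    apply (hi.const_mul (1 / (2 * Real.sqrt ε * Real.cos (2 * a)))).mono_fun'
    · exact Measurable.aestronglyMeasurable (by fun_prop)
    · rw [Set.uIoc_of_le hle]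
      filter_upwards [MeasureTheory.ae_restrict_mem measurableSet_Ioc] with x hx
      rw [Real.norm_of_nonneg (by positivity)]
      exact (f_bounds hε ha ha' hx.1.le hx.2).2
  unfold Lp
  rw [← he, ← intervalIntegral.integral_const_mul, ← intervalIntegral.integral_const_mul]
  exact ⟨intervalIntegral.integral_mono_on hle (hi.const_mul _) hf
      fun x hx => (f_bounds hε ha ha' hx.1 hx.2).1,
    intervalIntegral.integral_mono_on hle hf (hi.const_mul _)
      fun x hx => (f_bounds hε ha ha' hx.1 hx.2).2⟩

/-- `L_p(θ₀) → π/(2√ε)` as `θ₀ → 0⁺`. -/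
theorem stmt_7 (ε : ℝ) (hε : 0 < ε) :
    Tendsto (fun θ₀ => Lp ε θ₀)
      (nhdsWithin 0 (Set.Ioo 0 (Real.pi / 2)))
      (nhds (Real.pi / (2 * Real.sqrt ε))) := by
  have hs : 0 < Real.sqrt ε := Real.sqrt_pos.2 hε
  have ev : ∀ᶠ a in nhdsWithin 0 (Set.Ioo 0 (Real.pi / 2)), 0 < a ∧ a < Real.pi / 4 := by
    filter_upwards [self_mem_nhdsWithin, mem_nhdsWithin_of_mem_nhds
      (Iio_mem_nhds (show (0:ℝ) < Real.pi / 4 by positivity))] with a h1 h2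
    exact ⟨h1.1, h2⟩
  have hu : Tendsto (fun a => 1 / (2 * Real.sqrt ε * Real.cos (2 * a)) * Real.pi)
      (nhdsWithin 0 (Set.Ioo 0 (Real.pi / 2))) (nhds (Real.pi / (2 * Real.sqrt ε))) := by
    have : ContinuousAt (fun a => 1 / (2 * Real.sqrt ε * Real.cos (2 * a)) * Real.pi) 0 := by
      apply ContinuousAt.mul _ continuousAt_const
      apply ContinuousAt.div continuousAt_const (by fun_prop)
      simp [hs.ne']
    have h := this.tendsto.mono_left (nhdsWithin_le_nhds (s := Set.Ioo 0 (Real.pi / 2)))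
    convert h using 2
    simp
    ring
  have hl : Tendsto (fun _ : ℝ => 1 / (2 * Real.sqrt ε) * Real.pi)
      (nhdsWithin 0 (Set.Ioo 0 (Real.pi / 2))) (nhds (Real.pi / (2 * Real.sqrt ε))) := by
    rw [one_div_mul_eq_div]; exact tendsto_const_nhds
  refine tendsto_of_tendsto_of_tendsto_of_le_of_le' hl hu ?_ ?_
  · filter_upwards [ev] with a h using (Lp_bounds hε h.1 h.2).1
  · filter_upwards [ev] with a h using (Lp_bounds hε h.1 h.2).2
end

section
/- Let ε > 0 and let L > π/(2√ε). Then there exist θ₀ ∈ (0, π/2) and a twice continuously differentiable function θ : [0,L] → ℝ satisfying θ''(R) + 2ε·sin(2θ(R)) = 0 for all R ∈ [0,L], the boundary conditions θ'(0) = θ'(L) = 0, the symmetry θ(L − R) = −θ(R) for all R ∈ [0,L], with θ(0) = −θ₀, θ(L) = θ₀, and θ'(R) > 0 for all R ∈ (0,L). (That is, every ladder of length exceeding the critical length L₀ = π/(2√ε) admits a single-perversion equilibrium.) -/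
lemma aux_pos (k : ℝ) (hk : k ^ 2 < 1) (t : ℝ) : 0 < 1 - k ^ 2 * Real.sin t ^ 2 := by
  nlinarith [Real.sin_sq_le_one t, sq_nonneg k, sq_nonneg (Real.sin t)]

lemma aux_am (k : ℝ) (hk : k ^ 2 < 1) : ∃ φ : ℝ → ℝ,
    (∀ y, HasDerivAt φ (Real.sqrt (1 - k ^ 2 * Real.sin (φ y) ^ 2)) y) ∧
    (∀ y, φ (-y) = - φ y) ∧
    φ (∫ t in (0:ℝ)..(Real.pi / 2), (Real.sqrt (1 - k ^ 2 * Real.sin t ^ 2))⁻¹) = Real.pi / 2 ∧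
    StrictMono φ := by
  set f : ℝ → ℝ := fun t => (Real.sqrt (1 - k ^ 2 * Real.sin t ^ 2))⁻¹ with hf
  have hsp : ∀ t, 0 < Real.sqrt (1 - k ^ 2 * Real.sin t ^ 2) :=
    fun t => Real.sqrt_pos.2 (aux_pos k hk t)
  have hfc : Continuous f := by
    refine Continuous.inv₀ (by fun_prop) (fun t => (hsp t).ne')
  have hf1 : ∀ t, 1 ≤ f t := by
    intro t
    refine (one_le_inv₀ (hsp t)).2 ?_
    refine Real.sqrt_le_iff.2 ⟨by norm_num, ?_⟩
    nlinarith [mul_nonneg (sq_nonneg k) (sq_nonneg (Real.sin t))]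
  set F : ℝ → ℝ := fun x => ∫ t in (0:ℝ)..x, f t with hF
  have hFd : ∀ x, HasDerivAt F (f x) x := fun x =>
    intervalIntegral.integral_hasDerivAt_right (hfc.intervalIntegrable _ _)
      (hfc.stronglyMeasurableAtFilter _ _) hfc.continuousAt
  have hFc : Continuous F := continuous_iff_continuousAt.2 fun x => (hFd x).continuousAt
  have hFm : StrictMono F := strictMono_of_hasDerivAt_pos hFd
    (fun x => lt_of_lt_of_le one_pos (hf1 x))
  have hFodd : ∀ x, F (-x) = - F x := by
    intro x
    have h := intervalIntegral.integral_comp_neg (a := 0) (b := x) f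
    have h2 : ∀ t, f (-t) = f t := by intro t; simp [hf]
    simp only [h2, neg_zero] at h
    simp only [hF]
    rw [h, intervalIntegral.integral_symm]
  have hFge : ∀ x, 0 ≤ x → x ≤ F x := by
    intro x hx
    have h : ∫ t in (0:ℝ)..x, (1:ℝ) ≤ ∫ t in (0:ℝ)..x, f t :=
      intervalIntegral.integral_mono_on hx (by simp) (hfc.intervalIntegrable _ _) (fun t _ => hf1 t)
    simpa using h
  have htop : Filter.Tendsto F Filter.atTop Filter.atTop := by
    refine Filter.tendsto_atTop_mono' _ ?_ Filter.tendsto_id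
    filter_upwards [Filter.eventually_ge_atTop 0] with x hx using hFge x hx
  have hbot : Filter.Tendsto F Filter.atBot Filter.atBot := by
    refine Filter.tendsto_atBot_mono' _ ?_ Filter.tendsto_id
    filter_upwards [Filter.eventually_le_atBot 0] with x hx
    have := hFge (-x) (by linarith)
    rw [hFodd] at this
    simp only [id]; linarith
  have hFs : Function.Surjective F := hFc.surjective htop hbot
  set e := hFm.orderIsoOfSurjective F hFs with he
  have heF : ∀ x, e x = F x := fun x => rfl
  have hFe : ∀ y, F (e.symm y) = y := fun y => by rw [← heF]; simp
  have heF' : ∀ x, e.symm (F x) = x := fun x => by rw [← heF]; simp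
  refine ⟨e.symm, ?_, ?_, heF' _, e.symm.strictMono⟩
  · intro y
    have h := HasDerivAt.of_local_left_inverse (f := F) (g := e.symm) (a := y)
      (e.symm.continuous.continuousAt) (hFd (e.symm y))
      (lt_of_lt_of_le one_pos (hf1 _)).ne' (Filter.Eventually.of_forall hFe)
    simpa [hf] using h
  · intro y
    apply hFm.injective
    rw [hFodd, hFe, hFe]

lemma aux_K (M : ℝ) (hM : Real.pi / 2 < M) : ∃ k : ℝ, 0 < k ∧ k < 1 ∧
    ∫ t in (0:ℝ)..(Real.pi / 2), (Real.sqrt (1 - k ^ 2 * Real.sin t ^ 2))⁻¹ = M := by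
  have hpi := Real.pi_pos
  have hpi3 := Real.pi_gt_three
  set δ := Real.exp (-M) with hδ
  have hδ0 : 0 < δ := Real.exp_pos _
  have hδ1 : δ < 1 := by rw [hδ, Real.exp_lt_one_iff]; linarith
  set c := Real.sqrt (1 - δ ^ 2) with hc
  have hc2 : c ^ 2 = 1 - δ ^ 2 := Real.sq_sqrt (by nlinarith)
  have hc0 : 0 < c := Real.sqrt_pos.2 (by nlinarith)
  have hc1 : c < 1 := by nlinarith
  have hks : ∀ a, (c * Real.sin a) ^ 2 < 1 := by
    intro a
    rw [mul_pow]
    nlinarith [Real.sin_sq_le_one a, sq_nonneg (Real.sin a)]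
  set K : ℝ → ℝ := fun a => ∫ t in (0:ℝ)..(Real.pi / 2),
    (Real.sqrt (1 - (c * Real.sin a) ^ 2 * Real.sin t ^ 2))⁻¹ with hK
  have hKc : Continuous K := by
    apply intervalIntegral.continuous_parametric_intervalIntegral_of_continuous'
    refine Continuous.inv₀ (by fun_prop) ?_
    rintro ⟨a, t⟩
    exact (Real.sqrt_pos.2 (aux_pos _ (hks a) t)).ne'
  have hK0 : K 0 = Real.pi / 2 := by simp [hK]
  have hK1 : M ≤ K (Real.pi / 2) := by
    have hle : ∫ t in (0:ℝ)..(Real.pi / 2), (δ + Real.pi / 2 - t)⁻¹ ≤ K (Real.pi / 2) := by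
      apply intervalIntegral.integral_mono_on (by linarith)
      · apply ContinuousOn.intervalIntegrable
        refine ContinuousOn.inv₀ (by fun_prop) ?_
        intro t ht
        rw [Set.uIcc_of_le (by linarith)] at ht
        have := ht.2
        apply ne_of_gt; linarith
      · apply Continuous.intervalIntegrable
        refine Continuous.inv₀ (by fun_prop) ?_
        intro t
        exact (Real.sqrt_pos.2 (aux_pos _ (hks _) t)).ne'
      · intro t ht
        have h1 := ht.1
        have h2 := ht.2
        apply inv_anti₀ (Real.sqrt_pos.2 (aux_pos _ (hks _) t))
        apply Real.sqrt_le_iff.2 ⟨by linarith, ?_⟩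
        rw [Real.sin_pi_div_two, mul_one, hc2]
        set s := Real.pi / 2 - t with hs
        have hs0 : 0 ≤ s := by linarith
        have e1 : Real.sin t = Real.cos s := by rw [hs, Real.cos_pi_div_two_sub]
        have e2 : δ + Real.pi / 2 - t = δ + s := by rw [hs]; ring
        rw [e1, e2]
        have h3 := Real.sin_le hs0
        have h4 : 0 ≤ Real.sin s := Real.sin_nonneg_of_nonneg_of_le_pi hs0 (by linarith)
        have h5 := Real.sin_sq_add_cos_sq s
        have h6 : Real.sin s ^ 2 ≤ s ^ 2 := by gcongr
        have h7 := Real.cos_sq_le_one s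
        have h8 : δ ^ 2 * Real.cos s ^ 2 ≤ δ ^ 2 := by nlinarith [sq_nonneg δ]
        nlinarith [mul_nonneg hδ0.le hs0]
    refine le_trans ?_ hle
    have hI : ∫ t in (0:ℝ)..(Real.pi / 2), (δ + Real.pi / 2 - t)⁻¹
        = Real.log ((δ + Real.pi / 2) / δ) := by
      rw [intervalIntegral.integral_comp_sub_left (fun x => x⁻¹) (δ + Real.pi / 2)]
      rw [integral_inv_of_pos (by linarith) (by linarith)]
      congr 1
      congr 1 <;> ring
    rw [hI, Real.le_log_iff_exp_le (by positivity), le_div_iff₀ hδ0, hδ, ← Real.exp_add]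
    simp only [add_neg_cancel, Real.exp_zero]
    linarith
  obtain ⟨a, ha, haM⟩ := intermediate_value_Icc (a := 0) (b := Real.pi / 2) (by linarith)
    hKc.continuousOn (show M ∈ Set.Icc (K 0) (K (Real.pi / 2)) from ⟨by linarith, hK1⟩)
  have ha0 : 0 < a := by
    rcases ha.1.lt_or_eq with h | h
    · exact h
    · rw [← h, hK0] at haM; linarith
  have hsa : 0 < Real.sin a := Real.sin_pos_of_pos_of_lt_pi ha0 (by linarith [ha.2])
  refine ⟨c * Real.sin a, by positivity, ?_, haM⟩
  nlinarith [Real.sin_le_one a]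

/-- Every ladder of length exceeding the critical length `L₀ = π/(2√ε)` admits a
single-perversion equilibrium. -/
theorem stmt_8 (ε L : ℝ) (hε : 0 < ε) (hL : Real.pi / (2 * Real.sqrt ε) < L) :
    ∃ θ₀ ∈ Set.Ioo 0 (Real.pi / 2), ∃ θ : ℝ → ℝ, ContDiff ℝ 2 θ ∧
      (∀ R ∈ Set.Icc 0 L, deriv (deriv θ) R + 2 * ε * Real.sin (2 * θ R) = 0) ∧
      deriv θ 0 = 0 ∧ deriv θ L = 0 ∧
      (∀ R ∈ Set.Icc 0 L, θ (L - R) = -θ R) ∧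
      θ 0 = -θ₀ ∧ θ L = θ₀ ∧
      (∀ R ∈ Set.Ioo 0 L, 0 < deriv θ R) := by
  set w := Real.sqrt ε with hw
  have hw0 : 0 < w := Real.sqrt_pos.2 hε
  have hw2 : w ^ 2 = ε := Real.sq_sqrt hε.le
  have hM : Real.pi / 2 < w * L := by
    rw [div_lt_iff₀ (by positivity)] at hL
    linarith
  obtain ⟨k, hk0, hk1, hkM⟩ := aux_K _ hM
  have hk2 : k ^ 2 < 1 := by nlinarith
  obtain ⟨g, hgd, hgo, hgM, hgm⟩ := aux_am k hk2
  rw [hkM] at hgM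
  set φ : ℝ → ℝ := fun R => g (2 * w * (R - L / 2)) with hφ
  have hφL : φ L = Real.pi / 2 := by
    rw [← hgM]; simp only [hφ]; congr 1; ring
  have hφo : ∀ R, φ (L - R) = - φ R := by
    intro R; simp only [hφ]; rw [← hgo]; congr 1; ring
  have hφ0 : φ 0 = -(Real.pi / 2) := by
    have := hφo L
    rwa [sub_self, hφL] at this
  have hφd : ∀ R, HasDerivAt φ
      (2 * w * Real.sqrt (1 - k ^ 2 * Real.sin (φ R) ^ 2)) R := by
    intro R
    have h1 : HasDerivAt (fun R => 2 * w * (R - L / 2)) (2 * w) R := by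
      simpa using ((hasDerivAt_id R).sub_const (L / 2)).const_mul (2 * w)
    have := (hgd (2 * w * (R - L / 2))).comp R h1
    rw [mul_comm]
    exact this
  have hφc : Continuous φ := continuous_iff_continuousAt.2 fun x => (hφd x).continuousAt
  have hφm : StrictMono φ := by
    intro x y hxy
    apply hgm
    have : 0 < 2 * w := by positivity
    nlinarith
  have hφC1 : ContDiff ℝ 1 φ := by
    rw [contDiff_one_iff_deriv]
    refine ⟨fun x => (hφd x).differentiableAt, ?_⟩
    rw [show deriv φ = _ from funext fun x => (hφd x).deriv]
    fun_prop
  set θ : ℝ → ℝ := fun R => Real.arcsin (k * Real.sin (φ R)) with hθ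
  have hlt : ∀ R, -1 < k * Real.sin (φ R) ∧ k * Real.sin (φ R) < 1 := by
    intro R
    have := aux_pos k hk2 (φ R)
    constructor <;> nlinarith
  have hsinθ : ∀ R, Real.sin (θ R) = k * Real.sin (φ R) := fun R =>
    Real.sin_arcsin (hlt R).1.le (hlt R).2.le
  have hcosθ : ∀ R, Real.cos (θ R) = Real.sqrt (1 - k ^ 2 * Real.sin (φ R) ^ 2) := fun R => by
    rw [hθ, Real.cos_arcsin, mul_pow]
  have hθd : ∀ R, HasDerivAt θ (2 * w * k * Real.cos (φ R)) R := by
    intro R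
    have h1 := ((hφd R).sin).const_mul k
    have h2 := (Real.hasDerivAt_arcsin (hlt R).1.ne' (hlt R).2.ne).comp R h1
    refine h2.congr_deriv ?_
    have := (Real.sqrt_pos.2 (aux_pos k hk2 (φ R))).ne'
    rw [mul_pow]
    field_simp
  have hθ' : deriv θ = fun R => 2 * w * k * Real.cos (φ R) := funext fun R => (hθd R).deriv
  have hθ'' : ∀ R, deriv (deriv θ) R = - (2 * ε * Real.sin (2 * θ R)) := by
    intro R
    rw [hθ', (((hφd R).cos).const_mul (2 * w * k)).deriv, Real.sin_two_mul, hsinθ, hcosθ, ← hw2]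
    ring
  refine ⟨Real.arcsin k, ⟨Real.arcsin_pos.2 hk0, Real.arcsin_lt_pi_div_two.2 hk1⟩, θ, ?_, ?_, ?_,
    ?_, ?_, ?_, ?_, ?_⟩
  · rw [show (2 : WithTop ℕ∞) = 1 + 1 by norm_num, contDiff_succ_iff_deriv]
    refine ⟨fun x => (hθd x).differentiableAt, by simp, ?_⟩
    rw [hθ']
    fun_prop
  · intro R _
    rw [hθ'']; ring
  · rw [hθ']; simp [hφ0]
  · rw [hθ']; simp [hφL]
  · intro R _
    simp only [hθ]
    rw [hφo, Real.sin_neg, mul_neg, Real.arcsin_neg]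
  · simp [hθ, hφ0]
  · simp [hθ, hφL]
  · intro R hR
    rw [hθ']
    have h1 := hφm hR.1
    have h2 := hφm hR.2
    rw [hφ0] at h1
    rw [hφL] at h2
    have := Real.cos_pos_of_mem_Ioo ⟨h1, h2⟩
    positivity
end

section
/- Let ε > 0 and let 0 < L < π/(2√ε). Then there is no twice continuously differentiable function θ : [0,L] → ℝ satisfying θ''(R) + 2ε·sin(2θ(R)) = 0 for all R ∈ [0,L], θ'(0) = θ'(L) = 0, θ(L − R) = −θ(R) for all R ∈ [0,L], and θ'(R) > 0 for all R ∈ (0,L). (That is, ladders shorter than the critical length L₀ = π/(2√ε) admit no perversion equilibrium.) -/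
/-- Ladders shorter than the critical length `L₀ = π/(2√ε)` admit no
single-perversion equilibrium. -/
theorem stmt_9 (ε L : ℝ) (hε : 0 < ε) (hL0 : 0 < L)
    (hL : L < Real.pi / (2 * Real.sqrt ε)) :
    ¬ ∃ θ : ℝ → ℝ, ContDiff ℝ 2 θ ∧
      (∀ R ∈ Set.Icc 0 L, deriv (deriv θ) R + 2 * ε * Real.sin (2 * θ R) = 0) ∧
      deriv θ 0 = 0 ∧ deriv θ L = 0 ∧
      (∀ R ∈ Set.Icc 0 L, θ (L - R) = -θ R) ∧
      (∀ R ∈ Set.Ioo 0 L, 0 < deriv θ R) := by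
  rintro ⟨θ, hC, hode, -, hdL, hodd, hpos⟩
  obtain ⟨w, hw⟩ : ∃ w, w = 2 * Real.sqrt ε := ⟨_, rfl⟩
  have hwpos : 0 < w := by rw [hw]; positivity
  have hw2 : w ^ 2 = 4 * ε := by
    rw [hw, mul_pow, Real.sq_sqrt hε.le]; norm_num
  rw [← hw, lt_div_iff₀ hwpos] at hL
  have hd1 : ∀ x, HasDerivAt θ (deriv θ x) x := fun x =>
    ((hC.differentiable (by norm_num)) x).hasDerivAt
  have hC1 : ContDiff ℝ 1 (deriv θ) := by
    have h2 : ContDiff ℝ (1 + 1) θ := by norm_num; exact hC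
    exact (contDiff_succ_iff_deriv.1 h2).2.2
  have hd2 : ∀ x, HasDerivAt (deriv θ) (deriv (deriv θ) x) x := fun x =>
    ((hC1.differentiable (by norm_num)) x).hasDerivAt
  have hm0 : θ (L / 2) = 0 := by
    have h := hodd (L / 2) ⟨by linarith, by linarith⟩
    rw [show L - L / 2 = L / 2 by ring] at h
    linarith
  have hmono : StrictMonoOn θ (Set.Icc 0 L) := by
    apply strictMonoOn_of_deriv_pos (convex_Icc 0 L) hC.continuous.continuousOn
    intro x hx
    rw [interior_Icc] at hx
    exact hpos x hx
  have hLpos : 0 < θ L := by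
    rw [← hm0]
    exact hmono ⟨by linarith, by linarith⟩ ⟨by linarith, le_rfl⟩ (by linarith)
  have hs : ∀ x, HasDerivAt (fun x => Real.sin (w * (x - L / 2)))
      (Real.cos (w * (x - L / 2)) * w) x := fun x => by
    have h := (((hasDerivAt_id x).sub_const (L / 2)).const_mul w).sin
    simpa using h
  have hc : ∀ x, HasDerivAt (fun x => Real.cos (w * (x - L / 2)))
      (-Real.sin (w * (x - L / 2)) * w) x := fun x => by
    have h := (((hasDerivAt_id x).sub_const (L / 2)).const_mul w).cos
    simpa using h
  let W : ℝ → ℝ := fun x => deriv θ x * Real.sin (w * (x - L / 2))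
    - w * (θ x * Real.cos (w * (x - L / 2)))
  have hW : ∀ x, HasDerivAt W
      (Real.sin (w * (x - L / 2)) * (deriv (deriv θ) x + w ^ 2 * θ x)) x := fun x => by
    have h := ((hd2 x).mul (hs x)).sub (((hd1 x).mul (hc x)).const_mul w)
    exact HasDerivAt.congr_deriv h (by ring)
  have hWm : MonotoneOn W (Set.Icc (L / 2) L) := by
    apply monotoneOn_of_deriv_nonneg (convex_Icc _ _)
    · exact fun x _ => (hW x).continuousAt.continuousWithinAt
    · exact fun x _ => (hW x).differentiableAt.differentiableWithinAt
    · intro x hx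
      rw [interior_Icc] at hx
      obtain ⟨h1, h2⟩ := hx
      rw [(hW x).deriv]
      have hx0 : 0 < θ x := by
        rw [← hm0]
        exact hmono ⟨by linarith, by linarith⟩ ⟨by linarith, h2.le⟩ h1
      apply mul_nonneg
      · apply Real.sin_nonneg_of_nonneg_of_le_pi
        · exact mul_nonneg hwpos.le (by linarith)
        · nlinarith
      · have h := hode x ⟨by linarith, h2.le⟩
        have h3 := Real.sin_le (show 0 ≤ 2 * θ x by linarith)
        rw [hw2]
        nlinarith
  have hfin := hWm ⟨le_rfl, by linarith⟩ ⟨by linarith, le_rfl⟩ (show L / 2 ≤ L by linarith)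
  have hcos : 0 < Real.cos (w * (L - L / 2)) := by
    apply Real.cos_pos_of_mem_Ioo
    constructor <;> nlinarith [Real.pi_pos]
  have hprod := mul_pos hwpos (mul_pos hLpos hcos)
  simp only [W, hm0, hdL, sub_self, mul_zero, Real.sin_zero, zero_mul] at hfin
  linarith
end

section
/- Let ε > 0, L > 0, and define E[θ] = ∫_0^L ( θ'(R)²/2 + ε·cos(2θ(R)) ) dR on continuously differentiable functions θ : [0,L] → ℝ. Let θ : [0,L] → ℝ be twice continuously differentiable, nonconstant, satisfy θ''(R) + 2ε·sin(2θ(R)) = 0 for all R ∈ [0,L], θ'(0) = θ'(L) = 0, and −π/2 < θ(R) < π/2 for all R ∈ [0,L]. Then θ is not a local minimum of E: for every δ > 0 there exists a continuously differentiable φ : [0,L] → ℝ with sup_{R ∈ [0,L]} (|φ(R)| + |φ'(R)|) < δ and E[θ + φ] < E[θ]. (All perversion and multiple-perversion equilibria of the ladder with Û₀ = 0 are unstable.) -/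
theorem aux_cos (a b : ℝ) (hb : |b| ≤ 1) :
    Real.cos (a + b) ≤ Real.cos a * (1 - b ^ 2 / 2) - b * Real.sin a + |b| ^ 3 := by
  have h1 := Real.cos_bound hb
  have h2 := Real.sin_bound hb
  have hb0 := abs_nonneg b
  have h4 : |b| ^ 4 ≤ |b| ^ 3 := pow_le_pow_of_le_one hb0 hb (by norm_num)
  have h3 : |Real.sin b - b| ≤ |b| ^ 3 * (1 / 6 + 5 / 96) := by
    have : Real.sin b - b = (Real.sin b - (b - b ^ 3 / 6)) + (- (b ^ 3 / 6)) := by ring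
    rw [this]
    refine (abs_add_le _ _).trans ?_
    have : |-(b ^ 3 / 6)| = |b| ^ 3 / 6 := by
      rw [abs_neg, abs_div, abs_pow]; norm_num
    rw [this]
    have h5 : |b| ^ 5 ≤ |b| ^ 3 := pow_le_pow_of_le_one hb0 hb (by norm_num)
    have : 0 ≤ |b| ^ 3 := by positivity
    linarith
  have e : Real.cos (a + b) - (Real.cos a * (1 - b ^ 2 / 2) - b * Real.sin a)
      = Real.cos a * (Real.cos b - (1 - b ^ 2 / 2)) + (- Real.sin a) * (Real.sin b - b) := by
    rw [Real.cos_add]; ring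
  have k1 : Real.cos a * (Real.cos b - (1 - b ^ 2 / 2)) ≤ |b| ^ 4 * (5 / 96) := by
    refine (le_abs_self _).trans ?_
    rw [abs_mul]
    calc _ ≤ 1 * |Real.cos b - (1 - b ^ 2 / 2)| := by
          gcongr; exact Real.abs_cos_le_one a
      _ ≤ _ := by rw [one_mul]; exact h1
  have k2 : (- Real.sin a) * (Real.sin b - b) ≤ |b| ^ 3 * (1 / 6 + 5 / 96) := by
    refine (le_abs_self _).trans ?_
    rw [abs_mul, abs_neg]
    calc _ ≤ 1 * |Real.sin b - b| := by
          gcongr; exact Real.abs_sin_le_one a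
      _ ≤ _ := by rw [one_mul]; exact h3
  have : 0 ≤ |b| ^ 3 := by positivity
  linarith

theorem aux_quad (A K : ℝ) (hA : A ≠ 0) : ∃ s : ℝ, A * s + s ^ 2 * K < 0 := by
  refine ⟨-A / (|K| + 1), ?_⟩
  have h : 0 < |K| + 1 := by positivity
  have e : A * (-A / (|K| + 1)) + (-A / (|K| + 1)) ^ 2 * K
      = (A / (|K| + 1)) ^ 2 * (K - (|K| + 1)) := by field_simp; ring
  rw [e]
  have : 0 < (A / (|K| + 1)) ^ 2 := by positivity
  have := le_abs_self K
  nlinarith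

theorem aux_ne (ε L : ℝ) (hε : 0 < ε) (hL : 0 < L)
    (θ : ℝ → ℝ) (hθ : ∀ R, HasDerivAt θ (deriv θ R) R)
    (hθ2 : ∀ R, HasDerivAt (deriv θ) (deriv (deriv θ) R) R)
    (hnc : ∃ R₁ ∈ Set.Icc 0 L, ∃ R₂ ∈ Set.Icc 0 L, θ R₁ ≠ θ R₂)
    (hEL : ∀ R ∈ Set.Icc 0 L, deriv (deriv θ) R + 2 * ε * Real.sin (2 * θ R) = 0)
    (hb0 : deriv θ 0 = 0)
    (hrange : -(Real.pi / 2) < θ 0 ∧ θ 0 < Real.pi / 2) : Real.sin (2 * θ 0) ≠ 0 := by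
  intro h0
  have h1 : 2 * θ 0 = 0 :=
    (Real.sin_eq_zero_iff_of_lt_of_lt (by linarith) (by linarith)).1 h0
  have hF : ∀ R, HasDerivAt (fun R => deriv θ R ^ 2 / 2 - ε * Real.cos (2 * θ R))
      (deriv θ R * (deriv (deriv θ) R + 2 * ε * Real.sin (2 * θ R))) R := by
    intro R
    have := (((hθ2 R).pow 2).div_const 2).sub ((((hθ R).const_mul 2).cos).const_mul ε)
    refine this.congr_deriv ?_
    push_cast; ring
  have hc : ∀ R ∈ Set.Icc 0 L, deriv θ R ^ 2 / 2 - ε * Real.cos (2 * θ R)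
      = deriv θ 0 ^ 2 / 2 - ε * Real.cos (2 * θ 0) := by
    refine constant_of_has_deriv_right_zero
      (f := fun R => deriv θ R ^ 2 / 2 - ε * Real.cos (2 * θ R)) ?_ ?_
    · exact fun R _ => (hF R).continuousAt.continuousWithinAt
    · intro R hR
      have := (hF R).hasDerivWithinAt (s := Set.Ici R)
      rwa [hEL R ⟨hR.1, hR.2.le⟩, mul_zero] at this
  have hz : ∀ R ∈ Set.Icc 0 L, deriv θ R = 0 := by
    intro R hR
    have h := hc R hR
    rw [hb0, h1, Real.cos_zero] at h
    have := Real.cos_le_one (2 * θ R)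
    have : deriv θ R ^ 2 ≤ 0 := by nlinarith
    exact pow_eq_zero_iff (two_ne_zero) |>.1 (le_antisymm this (sq_nonneg _))
  have hk : ∀ R ∈ Set.Icc 0 L, θ R = θ 0 := by
    refine constant_of_has_deriv_right_zero ?_ ?_
    · exact fun R _ => (hθ R).continuousAt.continuousWithinAt
    · intro R hR
      have := (hθ R).hasDerivWithinAt (s := Set.Ici R)
      rwa [hz R ⟨hR.1, hR.2.le⟩] at this
  obtain ⟨a, ha, b, hb, hab⟩ := hnc
  exact hab ((hk a ha).trans (hk b hb).symm)

/-- All (multiple-)perversion equilibria of the ladder with `Û₀ = 0`, i.e. the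
nonconstant equilibria taking values in `(-π/2, π/2)`, are unstable. -/
theorem stmt_10 (ε L : ℝ) (hε : 0 < ε) (hL : 0 < L)
    (θ : ℝ → ℝ) (hθ : ContDiff ℝ 2 θ)
    (hnc : ∃ R₁ ∈ Set.Icc 0 L, ∃ R₂ ∈ Set.Icc 0 L, θ R₁ ≠ θ R₂)
    (hEL : ∀ R ∈ Set.Icc 0 L, deriv (deriv θ) R + 2 * ε * Real.sin (2 * θ R) = 0)
    (hb0 : deriv θ 0 = 0) (hbL : deriv θ L = 0)
    (hrange : ∀ R ∈ Set.Icc 0 L,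
      -(Real.pi / 2) < θ R ∧ θ R < Real.pi / 2) :
    ∀ δ > 0, ∃ φ : ℝ → ℝ, ContDiff ℝ 1 φ ∧
      (∀ R ∈ Set.Icc 0 L, |φ R| + |deriv φ R| < δ) ∧
      ladderEnergy ε L (θ + φ) < ladderEnergy ε L θ := by
  intro δ hδ
  have hd1 : ContDiff ℝ 1 (deriv θ) := by
    have : ContDiff ℝ (1 + 1) θ := by norm_num; exact hθ
    exact (contDiff_succ_iff_deriv.1 this).2.2
  have hθd : ∀ R, HasDerivAt θ (deriv θ R) R := fun R =>
    (hθ.differentiable (by norm_num) R).hasDerivAt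
  have hud : ∀ R, HasDerivAt (deriv θ) (deriv (deriv θ) R) R := fun R =>
    (hd1.differentiable (by norm_num) R).hasDerivAt
  have hpc : Continuous (deriv (deriv θ)) := hd1.continuous_deriv (by norm_num)
  have hne := aux_ne ε L hε hL θ hθd hud hnc hEL hb0 (hrange 0 ⟨le_rfl, hL.le⟩)
  have hθc : Continuous θ := hθ.continuous
  have huc : Continuous (deriv θ) := hd1.continuous
  generalize deriv (deriv θ) = p at *
  obtain ⟨u, hu⟩ : ∃ u, u = deriv θ := ⟨_, rfl⟩
  rw [← hu] at hd1 hθd hud huc hb0 hbL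
  obtain ⟨K, hK⟩ : ∃ K : ℝ, K = ∫ R in (0:ℝ)..L,
    (1 - 4 * ε * Real.cos (2 * θ R) * (L - R) ^ 2) := ⟨_, rfl⟩
  obtain ⟨s, hs⟩ := aux_quad (4 * ε * Real.sin (2 * θ 0) * L) K (by positivity)
  obtain ⟨q, hq⟩ : ∃ q : ℝ, q = 4 * ε * Real.sin (2 * θ 0) * L * s + s ^ 2 * K := ⟨_, rfl⟩
  rw [← hq] at hs
  obtain ⟨η, hη⟩ : ∃ η : ℝ → ℝ, η = fun R => u R + s * (L - R) := ⟨_, rfl⟩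
  have hηC : ContDiff ℝ 1 η := by rw [hη]; fun_prop
  have hηd : ∀ R, HasDerivAt η (p R - s) R := by
    intro R
    rw [hη]
    have := (hud R).add (((hasDerivAt_id R).const_sub L).const_mul s)
    refine this.congr_deriv ?_
    ring
  have hηc := hηC.continuous
  obtain ⟨M1, hM1⟩ := (isCompact_Icc (a := (0:ℝ)) (b := L)).exists_bound_of_continuousOn
    hηc.continuousOn
  obtain ⟨M2, hM2⟩ := (isCompact_Icc (a := (0:ℝ)) (b := L)).exists_bound_of_continuousOn
    (hpc.sub (continuous_const (y := s))).continuousOn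
  obtain ⟨M, hM0, hMa, hMb⟩ : ∃ M : ℝ, 0 < M ∧ (∀ R ∈ Set.Icc 0 L, |η R| ≤ M) ∧
      (∀ R ∈ Set.Icc 0 L, |p R - s| ≤ M) := by
    refine ⟨max 1 (max M1 M2), by positivity, fun R hR => ?_, fun R hR => ?_⟩
    · exact (hM1 R hR).trans ((le_max_left _ _).trans (le_max_right _ _))
    · exact (hM2 R hR).trans ((le_max_right _ _).trans (le_max_right _ _))
  obtain ⟨C, hC⟩ : ∃ C : ℝ, C = 8 * ε * M ^ 3 := ⟨_, rfl⟩
  have hC0 : 0 < C := by rw [hC]; positivity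
  obtain ⟨t, ht0, ht1, ht2, ht3⟩ : ∃ t : ℝ, 0 < t ∧ 2 * M * t ≤ 1 ∧ 2 * M * t < δ ∧
      C * L * t < -q / 2 := by
    have e1 : ∀ᶠ t : ℝ in nhdsWithin 0 (Set.Ioi 0), 2 * M * t < 1 := by
      refine nhdsWithin_le_nhds ?_
      exact ContinuousAt.eventually_lt (by fun_prop) (by fun_prop) (by simp)
    have e2 : ∀ᶠ t : ℝ in nhdsWithin 0 (Set.Ioi 0), 2 * M * t < δ := by
      refine nhdsWithin_le_nhds ?_
      exact ContinuousAt.eventually_lt (by fun_prop) (by fun_prop) (by simpa)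
    have e3 : ∀ᶠ t : ℝ in nhdsWithin 0 (Set.Ioi 0), C * L * t < -q / 2 := by
      refine nhdsWithin_le_nhds ?_
      exact ContinuousAt.eventually_lt (by fun_prop) (by fun_prop) (by simp; linarith)
    have e0 : ∀ᶠ t : ℝ in nhdsWithin 0 (Set.Ioi 0), 0 < t := self_mem_nhdsWithin
    obtain ⟨t, h0, h1, h2, h3⟩ := (e0.and (e1.and (e2.and e3))).exists
    exact ⟨t, h0, h1.le, h2, h3⟩
  have hφd : ∀ R, HasDerivAt (fun R => t * η R) (t * (p R - s)) R :=
    fun R => (hηd R).const_mul t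
  refine ⟨fun R => t * η R, by fun_prop, ?_, ?_⟩
  · intro R hR
    rw [(hφd R).deriv, abs_mul, abs_mul, abs_of_pos ht0]
    have := hMa R hR
    have := hMb R hR
    nlinarith
  have hder : ∀ R, deriv (θ + fun R => t * η R) R = u R + t * (p R - s) :=
    fun R => ((hθd R).add (hφd R)).deriv
  unfold ladderEnergy
  simp only [hder, Pi.add_apply, ← hu]
  -- the derivative parts
  obtain ⟨a, ha⟩ : ∃ a : ℝ → ℝ, a = fun R => p R * η R + u R * (p R - s) := ⟨_, rfl⟩
  have hac : Continuous a := by rw [ha]; fun_prop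
  have hI1 : ∫ R in (0:ℝ)..L, a R = 0 := by
    rw [intervalIntegral.integral_eq_sub_of_hasDerivAt (f := fun R => u R * η R)]
    · simp [hb0, hbL]
    · intro R _
      rw [ha]
      exact (hud R).mul (hηd R)
    · exact hac.intervalIntegrable _ _
  obtain ⟨b, hb⟩ : ∃ b : ℝ → ℝ, b = fun R =>
    (-2 * ε) * (Real.cos (2 * θ R) * (2 * u R)) * (u R + 2 * s * (L - R))
      + (-2 * ε) * Real.sin (2 * θ R) * (p R - 2 * s) := ⟨_, rfl⟩
  have hbc : Continuous b := by rw [hb]; fun_prop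
  have hI2 : ∫ R in (0:ℝ)..L, b R = 4 * ε * Real.sin (2 * θ 0) * L * s := by
    rw [intervalIntegral.integral_eq_sub_of_hasDerivAt
      (f := fun R => (-2 * ε) * Real.sin (2 * θ R) * (u R + 2 * s * (L - R)))]
    · have hpL := hEL L ⟨hL.le, le_rfl⟩
      simp [hb0, hbL]; ring
    · intro R _
      rw [hb]
      have := ((((hθd R).const_mul 2).sin).const_mul (-2 * ε)).mul
        ((hud R).add (((hasDerivAt_id R).const_sub L).const_mul (2 * s)))
      refine this.congr_deriv ?_
      simp only [Pi.add_apply, id]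
      ring
    · exact hbc.intervalIntegrable _ _
  obtain ⟨k, hk⟩ : ∃ k : ℝ → ℝ, k = fun R =>
    1 - 4 * ε * Real.cos (2 * θ R) * (L - R) ^ 2 := ⟨_, rfl⟩
  have hkc : Continuous k := by rw [hk]; fun_prop
  have hI3 : ∫ R in (0:ℝ)..L, k R = K := by rw [hk, hK]
  obtain ⟨f, hf⟩ : ∃ f : ℝ → ℝ, f = fun R =>
    u R ^ 2 / 2 + ε * Real.cos (2 * θ R) := ⟨_, rfl⟩
  have hfc : Continuous f := by rw [hf]; fun_prop
  have hle : ∫ R in (0:ℝ)..L, ((u R + t * (p R - s)) ^ 2 / 2 + ε * Real.cos (2 * (θ R + t * η R)))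
      ≤ ∫ R in (0:ℝ)..L, (f R + t * a R + t ^ 2 / 2 * b R + t ^ 2 / 2 * s ^ 2 * k R + C * t ^ 3) := by
    refine intervalIntegral.integral_mono_on hL.le
      (Continuous.intervalIntegrable (by fun_prop) _ _)
      (Continuous.intervalIntegrable (by fun_prop) _ _) ?_
    intro R hR
    have hm := hMa R hR
    have hp : p R = -2 * ε * Real.sin (2 * θ R) := by linarith [hEL R hR]
    have hB : |2 * t * η R| = 2 * t * |η R| := by
      rw [abs_mul, abs_of_pos (by positivity)]
    have hB1 : |2 * t * η R| ≤ 2 * t * M := by rw [hB]; gcongr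
    have h := aux_cos (2 * θ R) (2 * t * η R) (by linarith)
    have h3 : |2 * t * η R| ^ 3 ≤ (2 * t * M) ^ 3 := by gcongr
    have h' := mul_le_mul_of_nonneg_left (h.trans (add_le_add_right h3 _)) hε.le
    have e1 : 2 * (θ R + t * η R) = 2 * θ R + 2 * t * η R := by ring
    rw [e1]
    refine (add_le_add_right h' _).trans (le_of_eq ?_)
    simp only [hf, ha, hb, hk, hC, hp, hη]
    ring
  refine hle.trans_lt ?_
  have hsum : ∫ R in (0:ℝ)..L, (f R + t * a R + t ^ 2 / 2 * b R + t ^ 2 / 2 * s ^ 2 * k R + C * t ^ 3)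
      = (∫ R in (0:ℝ)..L, f R) + t ^ 2 / 2 * q + C * t ^ 3 * L := by
    rw [intervalIntegral.integral_add (Continuous.intervalIntegrable (by fun_prop) _ _)
        (Continuous.intervalIntegrable (by fun_prop) _ _),
      intervalIntegral.integral_add (Continuous.intervalIntegrable (by fun_prop) _ _)
        (Continuous.intervalIntegrable (by fun_prop) _ _),
      intervalIntegral.integral_add (Continuous.intervalIntegrable (by fun_prop) _ _)
        (Continuous.intervalIntegrable (by fun_prop) _ _),
      intervalIntegral.integral_add (Continuous.intervalIntegrable (by fun_prop) _ _)
        (Continuous.intervalIntegrable (by fun_prop) _ _),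
      intervalIntegral.integral_const_mul, intervalIntegral.integral_const_mul,
      intervalIntegral.integral_const_mul, intervalIntegral.integral_const, hI1, hI2, hI3, hq]
    simp only [smul_eq_mul]
    ring
  rw [hsum]
  have hff : ∫ R in (0:ℝ)..L, (u R ^ 2 / 2 + ε * Real.cos (2 * θ R)) = ∫ R in (0:ℝ)..L, f R := by
    rw [hf]
  rw [hff]
  have ht2 : 0 < t ^ 2 := by positivity
  nlinarith
end

section
/- Define k : (0, ∞) → ℝ by k(ν) = (1+ν)^{−1/2} · ∫_0^{π/2} ( 1 − sin²(t)/(1+ν) )^{−1/2} dt. Then k(ν) − log(4/√ν) tends to 0 as ν → 0⁺. (This is the long-ladder asymptotic k(ν) ≈ log(4/√ν) for ν ≪ 1.) -/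
open Filter

/-- `k(ν) = K(1/(1+ν))/√(1+ν)`, with the complete elliptic integral of the first
kind written directly as an integral. -/
noncomputable def kFun (ν : ℝ) : ℝ :=
  (1 / Real.sqrt (1 + ν)) *
    ∫ t in (0 : ℝ)..(Real.pi / 2), 1 / Real.sqrt (1 - Real.sin t ^ 2 / (1 + ν))

lemma kFun_aux1 (ν : ℝ) (h : 0 < ν) :
    kFun ν = ∫ t in (0 : ℝ)..(Real.pi / 2), 1 / Real.sqrt (ν + Real.cos t ^ 2) := by
  unfold kFun
  rw [← intervalIntegral.integral_const_mul]
  congr 1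
  ext t
  rw [div_mul_div_comm, one_mul, ← Real.sqrt_mul (by linarith)]
  congr 2
  have : (1 + ν) ≠ 0 := by linarith
  field_simp
  rw [Real.cos_sq']
  ring

lemma kFun_cont (ν : ℝ) (h : 0 < ν) (g : ℝ → ℝ) (hg : Continuous g) :
    Continuous (fun t => g t / Real.sqrt (ν + Real.cos t ^ 2)) := by
  apply hg.div (by fun_prop)
  intro t
  have : 0 < ν + Real.cos t ^ 2 := by positivity
  exact (Real.sqrt_pos.2 this).ne'

lemma kFun_aux2 (ν : ℝ) (h : 0 < ν) :
    ∫ t in (0 : ℝ)..(Real.pi / 2), Real.sin t / Real.sqrt (ν + Real.cos t ^ 2)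
      = Real.arsinh (1 / Real.sqrt ν) := by
  have hs : 0 < Real.sqrt ν := Real.sqrt_pos.2 h
  rw [intervalIntegral.integral_eq_sub_of_hasDerivAt
    (f := fun t => - Real.arsinh (Real.cos t / Real.sqrt ν))]
  · simp
  · intro t _
    have := (((Real.hasDerivAt_cos t).div_const (Real.sqrt ν)).arsinh).neg
    refine this.congr_deriv ?_
    have e : ν + Real.cos t ^ 2 = ν * (1 + (Real.cos t / Real.sqrt ν) ^ 2) := by
      rw [div_pow, Real.sq_sqrt h.le]; field_simp
    rw [e, Real.sqrt_mul h.le]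
    have : 0 < Real.sqrt (1 + (Real.cos t / Real.sqrt ν) ^ 2) := by positivity
    simp only [smul_eq_mul]
    field_simp
  · exact (kFun_cont ν h _ Real.continuous_sin).intervalIntegrable _ _

lemma kFun_aux3 :
    ∫ t in (0 : ℝ)..(Real.pi / 2), Real.cos t / (1 + Real.sin t) = Real.log 2 := by
  have hp : ∀ t ∈ Set.uIcc 0 (Real.pi / 2), 1 + Real.sin t ≠ 0 := by
    intro t ht
    rw [Set.uIcc_of_le (by positivity)] at ht
    have := Real.sin_nonneg_of_nonneg_of_le_pi ht.1 (by linarith [ht.2, Real.pi_pos])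
    linarith
  rw [intervalIntegral.integral_eq_sub_of_hasDerivAt
    (f := fun t => Real.log (1 + Real.sin t))]
  · norm_num
  · intro t ht
    exact ((Real.hasDerivAt_sin t).const_add 1).log (hp t ht)
  · apply ContinuousOn.intervalIntegrable
    exact Real.continuous_cos.continuousOn.div (by fun_prop) hp

lemma kFun_aux4 :
    Tendsto (fun ν : ℝ => ∫ t in (0 : ℝ)..(Real.pi / 2),
        (1 - Real.sin t) / Real.sqrt (ν + Real.cos t ^ 2))
      (nhdsWithin 0 (Set.Ioi (0 : ℝ))) (nhds (Real.log 2)) := by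
  rw [← kFun_aux3]
  apply intervalIntegral.tendsto_integral_filter_of_dominated_convergence (fun _ => (1 : ℝ))
  · filter_upwards [self_mem_nhdsWithin] with ν hν
    exact (kFun_cont ν hν _ (by fun_prop)).aestronglyMeasurable
  · filter_upwards [self_mem_nhdsWithin] with ν hν
    refine Eventually.of_forall fun t ht => ?_
    have hν : 0 < ν := hν
    rw [Set.uIoc_of_le (by positivity)] at ht
    have h0 := Real.sin_nonneg_of_nonneg_of_le_pi ht.1.le (by linarith [ht.2, Real.pi_pos])
    have h1 := Real.sin_le_one t
    have : 0 < ν + Real.cos t ^ 2 := by positivity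
    rw [Real.norm_of_nonneg (div_nonneg (by linarith) (Real.sqrt_nonneg _)),
      div_le_one (Real.sqrt_pos.2 this)]
    apply Real.le_sqrt_of_sq_le
    rw [Real.cos_sq']
    nlinarith
  · simp only [intervalIntegrable_const]
  · refine Eventually.of_forall fun t ht => ?_
    rw [Set.uIoc_of_le (by positivity)] at ht
    have h0 := Real.sin_nonneg_of_nonneg_of_le_pi ht.1.le (by linarith [ht.2, Real.pi_pos])
    have hc := Real.cos_nonneg_of_neg_pi_div_two_le_of_le (by linarith [ht.1, Real.pi_pos]) ht.2
    have hsc := Real.sin_sq_add_cos_sq t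
    rcases hc.eq_or_lt with hc | hc
    · have : Real.sin t = 1 := by rw [← hc] at hsc; nlinarith
      simp [this, ← hc]
    · have e : Real.cos t / (1 + Real.sin t)
          = (1 - Real.sin t) / Real.sqrt (0 + Real.cos t ^ 2) := by
        rw [zero_add, Real.sqrt_sq hc.le, div_eq_div_iff (by linarith) hc.ne']
        nlinarith
      rw [e]
      apply Tendsto.mono_left _ nhdsWithin_le_nhds
      have : ContinuousAt (fun ν : ℝ => (1 - Real.sin t) / Real.sqrt (ν + Real.cos t ^ 2)) 0 := by
        apply ContinuousAt.div (by fun_prop) (by fun_prop)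
        rw [zero_add, Real.sqrt_sq hc.le]
        exact hc.ne'
      exact this

lemma kFun_aux5 (ν : ℝ) (h : 0 < ν) :
    Real.arsinh (1 / Real.sqrt ν) - Real.log (4 / Real.sqrt ν)
      = Real.log ((1 + Real.sqrt (1 + ν)) / 4) := by
  have hs : 0 < Real.sqrt ν := Real.sqrt_pos.2 h
  unfold Real.arsinh
  rw [← Real.log_div (by positivity) (by positivity)]
  congr 1
  have e : 1 + (1 / Real.sqrt ν) ^ 2 = (1 + ν) / ν := by
    rw [div_pow, Real.sq_sqrt h.le]; field_simp; ring
  rw [e, Real.sqrt_div (by linarith)]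
  field_simp

/-- Long-ladder asymptotics: `k(ν) - log(4/√ν) → 0` as `ν → 0⁺`. -/
theorem stmt_16 :
    Tendsto (fun ν => kFun ν - Real.log (4 / Real.sqrt ν))
      (nhdsWithin 0 (Set.Ioi (0 : ℝ))) (nhds 0) := by
  have h1 : Tendsto (fun ν : ℝ => Real.log ((1 + Real.sqrt (1 + ν)) / 4))
      (nhdsWithin 0 (Set.Ioi (0 : ℝ))) (nhds (- Real.log 2)) := by
    apply Tendsto.mono_left _ nhdsWithin_le_nhds
    have : ContinuousAt (fun ν : ℝ => Real.log ((1 + Real.sqrt (1 + ν)) / 4)) 0 := by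
      apply ContinuousAt.log (by fun_prop)
      positivity
    have e : - Real.log 2 = Real.log ((1 + Real.sqrt (1 + 0)) / 4) := by
      rw [← Real.log_inv]; norm_num
    rw [e]
    exact this
  have h2 := h1.add kFun_aux4
  rw [neg_add_cancel] at h2
  refine h2.congr' ?_
  filter_upwards [self_mem_nhdsWithin] with ν hν
  have hν : 0 < ν := hν
  rw [← kFun_aux5 ν hν, ← kFun_aux2 ν hν, kFun_aux1 ν hν]
  have : ∫ t in (0 : ℝ)..(Real.pi / 2), 1 / Real.sqrt (ν + Real.cos t ^ 2)
      = (∫ t in (0 : ℝ)..(Real.pi / 2), Real.sin t / Real.sqrt (ν + Real.cos t ^ 2))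
       + ∫ t in (0 : ℝ)..(Real.pi / 2), (1 - Real.sin t) / Real.sqrt (ν + Real.cos t ^ 2) := by
    rw [← intervalIntegral.integral_add]
    · congr 1
      ext t
      ring
    · exact (kFun_cont ν hν _ Real.continuous_sin).intervalIntegrable _ _
    · exact (kFun_cont ν hν _ (by fun_prop)).intervalIntegrable _ _
  rw [this]
  ring
end

section
/- Let ε > 0, ν > 0, L > 0, and let θ : [0,L] → ℝ be continuously differentiable with θ(L/2) = 0 and θ'(R) = 2·√(ε·(1+ν)) · √( 1 − sin²(θ(R))/(1+ν) ) for all R ∈ [0,L]. Then: (i) θ(L) > π/2 if and only if √ε·L·√(1+ν) > ∫_0^{π/2} (1 − sin²(t)/(1+ν))^{−1/2} dt, and (ii) θ(L) < π if and only if √ε·L·√(1+ν) < 2·∫_0^{π/2} (1 − sin²(t)/(1+ν))^{−1/2} dt. (Condition (i) is the stability condition |θ₀| > π/2 for the perversion and condition (ii) is the no-hard-contact condition |θ₀| < π; together they read √ε·L/2 < k(ν) < √ε·L with k(ν) = K(1/(1+ν))/√(1+ν).) -/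
/-- Stability (`|θ₀| > π/2`) and no-hard-contact (`|θ₀| < π`) conditions for a
perversion with pseudo-energy parameter `ν`, in terms of the complete elliptic
integral `K(1/(1+ν)) = ∫_0^{π/2} (1 - sin²t/(1+ν))^{-1/2} dt`. -/
theorem stmt_18 (ε ν L : ℝ) (hε : 0 < ε) (hν : 0 < ν) (hL : 0 < L)
    (θ : ℝ → ℝ) (hθ : ContDiff ℝ 1 θ) (hmid : θ (L / 2) = 0)
    (hode : ∀ R ∈ Set.Icc 0 L,
      deriv θ R = 2 * Real.sqrt (ε * (1 + ν)) *
        Real.sqrt (1 - Real.sin (θ R) ^ 2 / (1 + ν))) :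
    (Real.pi / 2 < θ L ↔
      (∫ t in (0 : ℝ)..(Real.pi / 2), 1 / Real.sqrt (1 - Real.sin t ^ 2 / (1 + ν)))
        < Real.sqrt ε * L * Real.sqrt (1 + ν)) ∧
    (θ L < Real.pi ↔
      Real.sqrt ε * L * Real.sqrt (1 + ν) <
        2 * ∫ t in (0 : ℝ)..(Real.pi / 2),
          1 / Real.sqrt (1 - Real.sin t ^ 2 / (1 + ν))) := by
  have h1 : (0 : ℝ) < 1 + ν := by linarith
  have hpos : ∀ t : ℝ, 0 < Real.sqrt (1 - Real.sin t ^ 2 / (1 + ν)) := by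
    intro t
    apply Real.sqrt_pos.2
    have h : Real.sin t ^ 2 / (1 + ν) < 1 := by
      rw [div_lt_one h1]
      linarith [Real.sin_sq_le_one t]
    linarith
  obtain ⟨f, hf⟩ : ∃ f : ℝ → ℝ, f = fun t => 1 / Real.sqrt (1 - Real.sin t ^ 2 / (1 + ν)) :=
    ⟨_, rfl⟩
  have hfc : Continuous f := by
    rw [hf]
    refine Continuous.div continuous_const ?_ (fun t => (hpos t).ne')
    exact ((continuous_const.sub ((Real.continuous_sin.pow 2).div_const _))).sqrt
  have hfp : ∀ t, 0 < f t := by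
    intro t
    rw [hf]
    exact one_div_pos.2 (hpos t)
  have hi : ∀ a b : ℝ, IntervalIntegrable f MeasureTheory.volume a b :=
    fun a b => hfc.intervalIntegrable a b
  have hmono : StrictMono (fun x : ℝ => ∫ t in (0 : ℝ)..x, f t) := by
    intro a b hab
    have h2 := intervalIntegral.integral_add_adjacent_intervals (hi 0 a) (hi a b)
    have h3 : 0 < ∫ t in a..b, f t :=
      intervalIntegral.intervalIntegral_pos_of_pos (hi a b) hfp hab
    show (∫ t in (0 : ℝ)..a, f t) < ∫ t in (0 : ℝ)..b, f t
    linarith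
  have hpi : (∫ t in (0 : ℝ)..Real.pi, f t) = 2 * ∫ t in (0 : ℝ)..(Real.pi / 2), f t := by
    have h2 := intervalIntegral.integral_add_adjacent_intervals
      (hi 0 (Real.pi / 2)) (hi (Real.pi / 2) Real.pi)
    have h3 := intervalIntegral.integral_comp_sub_left (a := 0) (b := Real.pi / 2) f Real.pi
    have h4 : ∀ x, f (Real.pi - x) = f x := by
      intro x
      rw [hf]
      simp only [Real.sin_pi_sub]
    simp only [h4] at h3
    rw [show Real.pi - Real.pi / 2 = Real.pi / 2 by ring, sub_zero] at h3
    linarith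
  have hkey : (∫ t in (0 : ℝ)..(θ L), f t) = Real.sqrt ε * L * Real.sqrt (1 + ν) := by
    have h2 := intervalIntegral.integral_comp_mul_deriv (a := L / 2) (b := L) (f := θ)
      (f' := deriv θ) (g := f)
      (fun x _ => ((hθ.differentiable one_ne_zero) x).hasDerivAt)
      (hθ.continuous_deriv le_rfl).continuousOn hfc
    rw [hmid] at h2
    rw [← h2]
    have h3 : Set.EqOn (fun x => (f ∘ θ) x * deriv θ x)
        (fun _ => 2 * Real.sqrt (ε * (1 + ν))) (Set.uIcc (L / 2) L) := by
      intro x hx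
      rw [Set.uIcc_of_le (by linarith)] at hx
      have hp := (hpos (θ x)).ne'
      simp only [Function.comp]
      rw [hode x ⟨by linarith [hx.1], hx.2⟩, hf]
      show 1 / Real.sqrt (1 - Real.sin (θ x) ^ 2 / (1 + ν)) * _ = _
      generalize Real.sqrt (1 - Real.sin (θ x) ^ 2 / (1 + ν)) = s at hp
      field_simp
    rw [intervalIntegral.integral_congr h3, intervalIntegral.integral_const,
      Real.sqrt_mul hε.le, smul_eq_mul]
    ring
  have e : (∫ t in (0 : ℝ)..(Real.pi / 2), 1 / Real.sqrt (1 - Real.sin t ^ 2 / (1 + ν)))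
      = ∫ t in (0 : ℝ)..(Real.pi / 2), f t := by rw [hf]
  rw [e, ← hkey, ← hpi]
  exact ⟨(hmono.lt_iff_lt (a := Real.pi / 2) (b := θ L)).symm,
    (hmono.lt_iff_lt (a := θ L) (b := Real.pi)).symm⟩
end
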